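/- Let A be a C*-algebra, I a closed two-sided ideal of A, T : A → A an elementary operator T(x) = Σ_{i=1}^N a_i x b_i with coefficients a_i, b_i in the minimal unitization of A, and let q : A → A/I be the quotient map. Let b ∈ A/I. If there exists a_0 ∈ A with q(a_0) = b such that q(T(a_0)) = b, then the closure of the set { T(a) : a ∈ A, q(a) = b } contains an element of norm equal to ‖b‖ (in particular, b has a lift in this closure of norm exactly ‖b‖). -/

import Mathlib

/-!
Let `J = ker q`. The point is an improvement step: if `z` and `T z` both lift `b` and
`‖T z‖ ≤ ‖b‖ + ε`, then for every `δ > 0` there is a lift `z'` of `b` with `‖T z'‖ ≤ ‖b‖ + δ` and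
`‖T z' - T z‖ ≤ ε + δ`. Repeatedly halving `ε` gives a Cauchy sequence `T zₙ`, whose limit lifts
`b` and has norm at most, hence exactly, `‖b‖`.

For the step put `x = T z`, `t = ε / (‖b‖ + ε)` and `z' = z - t e z`, where `e` runs through a
quasicentral approximate unit of `J`. As `e` asymptotically commutes with the coefficients of `T`,
`T z' ≈ x - t e x`, which is within `t ‖x‖ ≤ ε` of `x`. If `y` is a lift of `b` with `‖y‖ = ‖b‖`,
then `e` almost fixes `x - y ∈ J`, so `x - t e x ≈ (1 - e) y + e (1 - t) x`, where `y` and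
`(1 - t) x` both have norm at most `‖b‖`. Convexity of `w ↦ w⋆w` bounds the norm of such a
combination by `‖b‖`, up to commutators with `e`.

Quasicentral `e` are averages of `n` members `u₁, …, uₙ` of any approximate unit of `J`: chosen
successively, they make the commutators `[uₖ, f]` almost orthogonal, so that `‖∑ₖ [uₖ, f]‖` grows
only like `√n`.
-/

open Filter Topology
open scoped CStarAlgebra

section MetricSpace

variable {X : Type*} [PseudoMetricSpace X] [CompleteSpace X]

lemma exists_mem_closure_nonpos_of_halving {S : Set X} (hS : S.Nonempty) {g : X → ℝ}
    (hg : Continuous g) {C : ℝ}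
    (h : ∀ ε > 0, ∀ x ∈ S, g x ≤ ε → ∃ x' ∈ S, g x' ≤ ε / 2 ∧ dist x x' ≤ C * ε) :
    ∃ x ∈ closure S, g x ≤ 0 := by
  obtain ⟨x₀, hx₀⟩ := hS
  have : Nonempty X := ⟨x₀⟩
  choose! next next_mem next_le dist_next using h
  set K : ℝ := |g x₀| + 1
  let u : ℕ → X := fun n => Nat.rec x₀ (fun k x => next (K / 2 ^ k) x) n
  have hK (n : ℕ) : 0 < K / 2 ^ n := by positivity
  have hu (n : ℕ) : u n ∈ S ∧ g (u n) ≤ K / 2 ^ n := by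
    induction n with
    | zero => exact ⟨hx₀, by rw [pow_zero, div_one]; exact (le_abs_self _).trans (lt_add_one _).le⟩
    | succ n ih =>
      refine ⟨next_mem _ (hK n) _ ih.1 ih.2, (next_le _ (hK n) _ ih.1 ih.2).trans_eq ?_⟩
      rw [pow_succ, div_div]
  have hdist (n : ℕ) : dist (u n) (u (n + 1)) ≤ 2 * (C * K) / 2 / 2 ^ n :=
    (dist_next _ (hK n) _ (hu n).1 (hu n).2).trans_eq (by ring)
  obtain ⟨x, hx⟩ := cauchySeq_tendsto_of_complete (cauchySeq_of_le_geometric_two hdist)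
  have hlim : Tendsto (fun n : ℕ => K / 2 ^ n) atTop (𝓝 0) :=
    tendsto_const_nhds.div_atTop (tendsto_pow_atTop_atTop_of_one_lt one_lt_two)
  exact ⟨x, mem_closure_of_tendsto hx (.of_forall fun n => (hu n).1),
    le_of_tendsto_of_tendsto' ((hg.tendsto x).comp hx) hlim fun n => (hu n).2⟩

end MetricSpace

section OperatorConvexity

variable {U : Type*} [CStarAlgebra U] [PartialOrder U] [StarOrderedRing U]

lemma star_mul_self_convexComb_le {e : U} (he : e ∈ Set.Icc 0 1) (y v : U) :
    star ((1 - e) * y + e * v) * ((1 - e) * y + e * v) ≤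
      star y * (1 - e) * y + star v * e * v := by
  have hsa : star e = e := (IsSelfAdjoint.of_nonneg he.1).star_eq
  have hvar : 0 ≤ e - e ^ 2 := sub_nonneg.2 <| by
    simpa only [pow_one] using CStarAlgebra.pow_antitone he.1 he.2 one_le_two
  have key : star y * (1 - e) * y + star v * e * v -
      star ((1 - e) * y + e * v) * ((1 - e) * y + e * v) =
        star (y - v) * (e - e ^ 2) * (y - v) := by
    simp only [star_add, star_sub, star_mul, star_one, hsa]
    noncomm_ring
  exact sub_nonneg.1 (key ▸ star_left_conjugate_nonneg hvar _)

lemma exists_star_mul_self_add_eq_algebraMap {x : U} {m : ℝ} (hx : ‖x‖ ≤ m) :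
    ∃ d : U, star x * x + star d * d = algebraMap ℝ U (m ^ 2) := by
  have hle : star x * x ≤ algebraMap ℝ U (m ^ 2) := by
    rw [← CStarAlgebra.norm_le_iff_le_algebraMap _ (by positivity) (star_mul_self_nonneg x),
      CStarRing.norm_star_mul_self, ← sq]
    gcongr
  obtain ⟨d, hd⟩ := CStarAlgebra.nonneg_iff_eq_star_mul_self.1 (sub_nonneg.2 hle)
  exact ⟨d, by rw [← hd, add_sub_cancel]⟩

variable {ι : Type*} {l : Filter ι} {e : ι → U}

lemma exists_tendsto_conjugate_add_conjugate_sub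
    (hcomm : ∀ f : U, Tendsto (fun i => ⁅e i, f⁆) l (𝓝 0)) {x : U} {m : ℝ} (hx : ‖x‖ ≤ m) :
    ∃ d : U, star x * x + star d * d = algebraMap ℝ U (m ^ 2) ∧
      Tendsto (fun i => star x * e i * x + star d * e i * d - algebraMap ℝ U (m ^ 2) * e i)
        l (𝓝 0) := by
  obtain ⟨d, hd⟩ := exists_star_mul_self_add_eq_algebraMap hx
  have hlim := ((hcomm x).const_mul (star x)).add ((hcomm d).const_mul (star d))
  rw [mul_zero, mul_zero, add_zero] at hlim
  refine ⟨d, hd, hlim.congr fun i => ?_⟩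
  rw [← hd, Ring.lie_def, Ring.lie_def]
  noncomm_ring

lemma eventually_norm_convexComb_lt (he : ∀ᶠ i in l, e i ∈ Set.Icc 0 1)
    (hcomm : ∀ f : U, Tendsto (fun i => ⁅e i, f⁆) l (𝓝 0)) {y v : U} {m r : ℝ}
    (hy : ‖y‖ ≤ m) (hv : ‖v‖ ≤ m) (hr : m < r) :
    ∀ᶠ i in l, ‖(1 - e i) * y + e i * v‖ < r := by
  have hm : 0 ≤ m := (norm_nonneg y).trans hy
  obtain ⟨c, hc, hylim⟩ := exists_tendsto_conjugate_add_conjugate_sub hcomm hy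
  obtain ⟨d, -, hvlim⟩ := exists_tendsto_conjugate_add_conjugate_sub hcomm hv
  -- The conjugates by `c` and `d` complete the limit to `m ^ 2`, and only add positive elements.
  set R : ι → U := fun i => star y * (1 - e i) * y + star v * e i * v +
    (star c * (1 - e i) * c + star d * e i * d) with hR
  have hRlim : Tendsto R l (𝓝 (algebraMap ℝ U (m ^ 2))) := by
    have h := (hvlim.sub hylim).const_add (algebraMap ℝ U (m ^ 2))
    rw [sub_zero, add_zero] at h
    refine h.congr fun i => ?_
    rw [hR, ← hc]
    noncomm_ring
  have hnorm : ‖algebraMap ℝ U (m ^ 2)‖ < r ^ 2 := calc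
    ‖algebraMap ℝ U (m ^ 2)‖ ≤ m ^ 2 := by
      rw [CStarAlgebra.norm_le_iff_le_algebraMap _ (by positivity)
        (algebraMap_nonneg U (by positivity))]
    _ < r ^ 2 := by gcongr
  filter_upwards [he, hRlim.norm.eventually_lt_const hnorm] with i hei hRi
  refine lt_of_pow_lt_pow_left₀ 2 (hm.trans hr.le) ?_
  rw [sq, ← CStarRing.norm_star_mul_self]
  refine (CStarAlgebra.norm_le_norm_of_nonneg_of_le (star_mul_self_nonneg _) ?_).trans_lt hRi
  exact (star_mul_self_convexComb_le hei y v).trans <| le_add_of_nonneg_right <|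
    add_nonneg (star_left_conjugate_nonneg (sub_nonneg.2 hei.2) c)
      (star_left_conjugate_nonneg hei.1 d)

end OperatorConvexity

section Lift

lemma norm_mul_cfc_star_mul_self_le {U : Type*} [CStarAlgebra U] (x : U) {k : ℝ → ℝ}
    (hk : Continuous k) {β : ℝ} (hβ : 0 ≤ β) (hkβ : ∀ s, 0 ≤ s → s * k s ^ 2 ≤ β ^ 2) :
    ‖x * cfc k (star x * x)‖ ≤ β := by
  let _ := CStarAlgebra.spectralOrder U
  let _ := CStarAlgebra.spectralOrderedRing U
  set h := star x * x with hh
  have hsq : star (x * cfc k h) * (x * cfc k h) = cfc (fun s => k s * (s * k s)) h := by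
    have hsa : star (cfc k h) = cfc k h := (cfc_predicate k h : IsSelfAdjoint _).star_eq
    have hid : Continuous fun s : ℝ => s := continuous_id
    rw [cfc_mul k (fun s => s * k s) h hk.continuousOn (hid.mul hk).continuousOn,
      cfc_mul (fun s => s) k h hid.continuousOn hk.continuousOn,
      cfc_id' ℝ h (.star_mul_self x), star_mul, hsa, hh]
    simp only [mul_assoc]
  refine le_of_abs_le (abs_le_of_sq_le_sq ?_ hβ)
  rw [sq, ← CStarRing.norm_star_mul_self, hsq]
  refine norm_cfc_le (sq_nonneg β) fun s hs => ?_
  have hs : 0 ≤ s := spectrum_nonneg_of_nonneg (star_mul_self_nonneg x) hs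
  have hks : k s * (s * k s) = s * k s ^ 2 := by ring
  rw [hks, Real.norm_of_nonneg (by positivity)]
  exact hkβ s hs

lemma exists_map_eq_norm_le_of_unital {U V : Type*} [CStarAlgebra U] [CStarAlgebra V]
    (φ : U →⋆ₐ[ℂ] V) (x : U) : ∃ y, φ y = φ x ∧ ‖y‖ ≤ ‖φ x‖ := by
  rcases eq_or_ne (φ x) 0 with hx | hx
  · exact ⟨0, by rw [map_zero, hx], by rw [norm_zero]; exact norm_nonneg _⟩
  set β := ‖φ x‖
  have hβ : 0 < β := norm_pos_iff.2 hx
  have hmax (s : ℝ) : 0 < max s (β ^ 2) := lt_max_of_lt_right (by positivity)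
  -- `k` is `1` on the spectrum of `φ (star x * x)`, so `x * cfc k (star x * x)` still lifts `φ x`.
  let k : ℝ → ℝ := fun s => β / √(max s (β ^ 2))
  have hk : Continuous k :=
    continuous_const.div (by fun_prop) fun s => (Real.sqrt_pos.2 (hmax s)).ne'
  set h := star x * x with hh
  have hsa : IsSelfAdjoint h := .star_mul_self x
  have hspec : (spectrum ℝ (φ h)).EqOn k 1 := fun s hs => by
    have hsβ : s ≤ β ^ 2 := calc
      s ≤ ‖φ h‖ := (le_abs_self s).trans
        (IsometricContinuousFunctionalCalculus.norm_spectrum_le (φ h) hs (hsa.map φ))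
      _ = β ^ 2 := by rw [hh, map_mul, map_star, CStarRing.norm_star_mul_self, sq]
    simp only [k, Pi.one_apply, max_eq_right hsβ, Real.sqrt_sq hβ.le, div_self hβ.ne']
  have hφ : φ (cfc k h) = 1 := by
    rw [StarAlgHom.map_cfc φ k h hk.continuousOn (map_continuous φ) hsa (hsa.map φ),
      cfc_congr hspec, cfc_one ℝ (φ h) (hsa.map φ)]
  refine ⟨x * cfc k h, by rw [map_mul, hφ, mul_one],
    norm_mul_cfc_star_mul_self_le x hk hβ.le fun s _ => ?_⟩
  rw [div_pow, Real.sq_sqrt (hmax s).le, mul_div_assoc', div_le_iff₀ (hmax s), mul_comm]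
  gcongr
  exact le_max_left _ _

lemma exists_map_eq_norm_le {A B : Type*} [NonUnitalCStarAlgebra A] [NonUnitalCStarAlgebra B]
    (q : A →⋆ₙₐ[ℂ] B) (x : A) : ∃ y, q y = q x ∧ ‖y‖ ≤ ‖q x‖ := by
  obtain ⟨w, hw, hwx⟩ := exists_map_eq_norm_le_of_unital (Unitization.starMap q) (x : A⁺¹)
  have hfst : w.fst = 0 := by
    simpa [Unitization.algebraMap_eq_inl] using congrArg (Unitization.fstHom ℂ B) hw
  lift w to A using hfst
  rw [Unitization.starMap_inr, Unitization.starMap_inr] at hw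
  rw [Unitization.starMap_inr, Unitization.norm_inr, Unitization.norm_inr] at hwx
  exact ⟨w, Unitization.inr_injective hw, hwx⟩

end Lift

section QuasicentralApproxUnit

lemma norm_add_sq_le_add_two_mul_norm_star_mul {A : Type*} [NonUnitalNormedRing A] [StarRing A]
    [CStarRing A] (x y : A) : ‖x + y‖ ^ 2 ≤ ‖x‖ ^ 2 + ‖y‖ ^ 2 + 2 * ‖star y * x‖ := by
  have hswap : ‖star x * y‖ = ‖star y * x‖ := by rw [← norm_star, star_mul, star_star]
  have hexpand : star (x + y) * (x + y) =
      star x * x + star y * y + (star x * y + star y * x) := by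
    rw [star_add]
    noncomm_ring
  simp only [sq, ← CStarRing.norm_star_mul_self, hexpand]
  grw [norm_add_le, norm_add_le, norm_add_le, hswap, two_mul]

variable {A : Type*} [NonUnitalCStarAlgebra A] [PartialOrder A]

/-- A filter on `A` along which `e` lies in the positive part of the unit ball of the ideal `J` and
`e * x` tends to `x` for all `x ∈ J`. The filter lives on `A` rather than on `J`, since the
commutators with elements of `A` are what matters later. -/
structure IsIdealApproxUnit (J : TwoSidedIdeal A) (l : Filter A) : Prop where
  neBot : l.NeBot
  eventually_mem : ∀ᶠ e in l, e ∈ J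
  eventually_nonneg : ∀ᶠ e in l, 0 ≤ e
  eventually_norm_le : ∀ᶠ e in l, ‖e‖ ≤ 1
  tendsto_mul : ∀ x ∈ J, Tendsto (· * x) l (𝓝 x)

/-- An approximate unit of `J` that asymptotically commutes with every element of `A`. -/
structure IsQuasicentralApproxUnit (J : TwoSidedIdeal A) (l : Filter A) : Prop
    extends IsIdealApproxUnit J l where
  tendsto_lie : ∀ a : A, Tendsto (fun e => ⁅e, a⁆) l (𝓝 0)

namespace IsIdealApproxUnit

variable {J : TwoSidedIdeal A} {l : Filter A}

lemma smul_mem (hl : IsIdealApproxUnit J l) (hJ : IsClosed (J : Set A)) (r : ℝ) {x : A}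
    (hx : x ∈ J) : r • x ∈ J := by
  have := hl.neBot
  refine hJ.mem_of_tendsto ((hl.tendsto_mul x hx).const_smul r) (.of_forall fun e => ?_)
  rw [← smul_mul_assoc]
  exact J.mul_mem_left _ _ hx

variable [StarOrderedRing A]

lemma tendsto_star_lie_mul (hl : IsIdealApproxUnit J l) (f : A) {d : A} (hd : d ∈ J) :
    Tendsto (fun u => star ⁅u, f⁆ * d) l (𝓝 0) := by
  have hlim := ((hl.tendsto_mul d hd).const_mul (star f)).sub
    (hl.tendsto_mul (star f * d) (J.mul_mem_left _ _ hd))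
  rw [sub_self] at hlim
  refine hlim.congr' ?_
  filter_upwards [hl.eventually_nonneg] with u hu
  rw [Ring.lie_def, star_sub, star_mul, star_mul, (IsSelfAdjoint.of_nonneg hu).star_eq]
  noncomm_ring

/-- As `u` almost fixes `⁅g, f⁆` and `star f * ⁅g, f⁆`, the commutator `⁅u, f⁆` is almost orthogonal
to `⁅g, f⁆`. -/
lemma eventually_norm_lie_add_sq_le (hl : IsIdealApproxUnit J l) {g : A} (hg : g ∈ J) (f : A) :
    ∀ᶠ u in l, ‖⁅g + u, f⁆‖ ^ 2 ≤ ‖⁅g, f⁆‖ ^ 2 + ((2 * ‖f‖) ^ 2 + 2) := by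
  have hgf : ⁅g, f⁆ ∈ J := J.sub_mem (J.mul_mem_right _ _ hg) (J.mul_mem_left _ _ hg)
  have horth := (hl.tendsto_star_lie_mul f hgf).norm.eventually_le_const
    (norm_zero.trans_lt one_pos)
  filter_upwards [hl.eventually_norm_le, horth] with u hu huf
  have hadd : ⁅g + u, f⁆ = ⁅g, f⁆ + ⁅u, f⁆ := by
    simp only [Ring.lie_def]
    noncomm_ring
  have hlie : ‖⁅u, f⁆‖ ≤ 2 * ‖f‖ := by
    rw [Ring.lie_def]
    grw [norm_sub_le, norm_mul_le, norm_mul_le, hu]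
    linarith
  have hsq := norm_add_sq_le_add_two_mul_norm_star_mul ⁅g, f⁆ ⁅u, f⁆
  rw [hadd]
  grw [hsq, hlie, huf]
  linarith

lemma exists_norm_lie_sq_le (hl : IsIdealApproxUnit J l) (F : Finset A) {ε : ℝ} (hε : 0 < ε)
    (n : ℕ) : ∃ g ∈ J, 0 ≤ g ∧ ‖g‖ ≤ n ∧ ∀ f ∈ F,
      ‖⁅g, f⁆‖ ^ 2 ≤ n * ((2 * ‖f‖) ^ 2 + 2) ∧ (f ∈ J → ‖g * f - n • f‖ ≤ n * ε) := by
  have := hl.neBot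
  induction n with
  | zero => exact ⟨0, J.zero_mem, le_rfl, by simp, by simp [Ring.lie_def]⟩
  | succ n ih =>
    obtain ⟨g, hgJ, hg₀, hgn, hgF⟩ := ih
    have hlie : ∀ᶠ u in l, ∀ f ∈ F, ‖⁅g + u, f⁆‖ ^ 2 ≤ ‖⁅g, f⁆‖ ^ 2 + ((2 * ‖f‖) ^ 2 + 2) :=
      (eventually_all_finset F).2 fun f _ => hl.eventually_norm_lie_add_sq_le hgJ f
    have hmul : ∀ᶠ u in l, ∀ f ∈ F, f ∈ J → ‖u * f - f‖ ≤ ε := by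
      refine (eventually_all_finset F).2 fun f _ => eventually_imp_distrib_left.2 fun hf => ?_
      simpa only [← dist_eq_norm] using
        (hl.tendsto_mul f hf).eventually (Metric.closedBall_mem_nhds f hε)
    obtain ⟨u, huJ, hu₀, hu₁, hulie, humul⟩ := (hl.eventually_mem.and <|
      hl.eventually_nonneg.and <| hl.eventually_norm_le.and <| hlie.and hmul).exists
    refine ⟨g + u, J.add_mem hgJ huJ, add_nonneg hg₀ hu₀, ?_, fun f hf => ⟨?_, fun hfJ => ?_⟩⟩
    · push_cast
      exact norm_add_le_of_le hgn hu₁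
    · push_cast
      linarith [hulie f hf, (hgF f hf).1]
    · have hsplit : (g + u) * f - (n + 1) • f = (g * f - n • f) + (u * f - f) := by
        rw [add_mul, succ_nsmul, add_sub_add_comm]
      rw [hsplit]
      push_cast
      rw [add_one_mul]
      exact norm_add_le_of_le ((hgF f hf).2 hfJ) (humul f hf hfJ)

lemma exists_norm_lie_le (hl : IsIdealApproxUnit J l) (hJ : IsClosed (J : Set A)) (F : Finset A)
    {ε : ℝ} (hε : 0 < ε) : ∃ e ∈ J, 0 ≤ e ∧ ‖e‖ ≤ 1 ∧ ∀ f ∈ F,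
      ‖⁅e, f⁆‖ ≤ ε ∧ (f ∈ J → ‖e * f - f‖ ≤ ε) := by
  have hlarge : ∀ᶠ n : ℕ in atTop, ∀ f ∈ F, (2 * ‖f‖) ^ 2 + 2 ≤ n * ε ^ 2 :=
    (eventually_all_finset F).2 fun f _ => (tendsto_natCast_atTop_atTop.atTop_mul_const
      (by positivity)).eventually_ge_atTop _
  obtain ⟨n, hnF, hn⟩ := (hlarge.and (eventually_gt_atTop 0)).exists
  obtain ⟨g, hgJ, hg₀, hgn, hgF⟩ := hl.exists_norm_lie_sq_le F hε n
  have hn' : (0 : ℝ) < n := Nat.cast_pos.2 hn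
  have hscale {x : A} {s : ℝ} (hx : ‖x‖ ≤ n * s) : ‖(n : ℝ)⁻¹ • x‖ ≤ s := by
    rwa [norm_smul, norm_inv, Real.norm_natCast, inv_mul_le_iff₀ hn']
  refine ⟨(n : ℝ)⁻¹ • g, hl.smul_mem hJ _ hgJ, smul_nonneg (by positivity) hg₀,
    hscale (by rwa [mul_one]), fun f hf => ⟨?_, fun hfJ => ?_⟩⟩
  · rw [Ring.lie_def, smul_mul_assoc, mul_smul_comm, ← smul_sub, ← Ring.lie_def]
    refine hscale (le_of_abs_le (abs_le_of_sq_le_sq ?_ (by positivity)))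
    grw [(hgF f hf).1, hnF f hf, mul_pow, sq (n : ℝ), mul_assoc]
  · have hmul : (n : ℝ)⁻¹ • g * f - f = (n : ℝ)⁻¹ • (g * f - n • f) := by
      rw [smul_sub, smul_mul_assoc, ← Nat.cast_smul_eq_nsmul ℝ, inv_smul_smul₀ hn'.ne']
    rw [hmul]
    exact hscale ((hgF f hf).2 hfJ)

lemma exists_isQuasicentralApproxUnit (hl : IsIdealApproxUnit J l) (hJ : IsClosed (J : Set A)) :
    ∃ l' : Filter A, IsQuasicentralApproxUnit J l' := by
  classical
  choose e he_mem he_nonneg he_norm he using fun i : Finset A × ℕ =>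
    hl.exists_norm_lie_le hJ i.1 (Nat.one_div_pos_of_nat (α := ℝ) (n := i.2))
  have hlim : Tendsto (fun i : Finset A × ℕ => 1 / ((i.2 : ℝ) + 1)) (atTop ×ˢ atTop) (𝓝 0) :=
    tendsto_one_div_add_atTop_nhds_zero_nat.comp tendsto_snd
  have hmem (f : A) : ∀ᶠ i : Finset A × ℕ in atTop ×ˢ atTop, f ∈ i.1 :=
    tendsto_fst.eventually <| (eventually_ge_atTop {f}).mono fun _ => Finset.singleton_subset_iff.1
  refine ⟨map e (atTop ×ˢ atTop), ⟨map_neBot, eventually_map.2 (.of_forall he_mem),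
    eventually_map.2 (.of_forall he_nonneg), eventually_map.2 (.of_forall he_norm),
    fun x hx => ?_⟩, fun a => ?_⟩
  · refine tendsto_map'_iff.2 <| tendsto_iff_norm_sub_tendsto_zero.2 <| squeeze_zero_norm' ?_ hlim
    filter_upwards [hmem x] with i hi
    simpa using (he i x hi).2 hx
  · refine tendsto_map'_iff.2 <| squeeze_zero_norm' ?_ hlim
    exact (hmem a).mono fun i hi => (he i a hi).1

end IsIdealApproxUnit

lemma isClosed_ker {A B : Type*} [NonUnitalCStarAlgebra A] [NonUnitalCStarAlgebra B]
    (q : A →⋆ₙₐ[ℂ] B) : IsClosed (TwoSidedIdeal.ker q : Set A) := by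
  have hker : (TwoSidedIdeal.ker q : Set A) = q ⁻¹' {0} :=
    Set.ext fun _ => TwoSidedIdeal.mem_ker q
  rw [hker]
  exact isClosed_singleton.preimage (map_continuous q)

lemma exists_isIdealApproxUnit_ker [StarOrderedRing A] {B : Type*} [NonUnitalCStarAlgebra B]
    (q : A →⋆ₙₐ[ℂ] B) : ∃ l : Filter A, IsIdealApproxUnit (TwoSidedIdeal.ker q) l := by
  let K : NonUnitalStarSubalgebra ℂ A := NonUnitalStarAlgHom.equalizer q 0
  have : IsClosed (K : Set A) := isClosed_eq (map_continuous q) continuous_const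
  let _ : NonUnitalCStarAlgebra K := NonUnitalStarSubalgebra.nonUnitalCStarAlgebra K
  let _ := CStarAlgebra.spectralOrder K
  let _ := CStarAlgebra.spectralOrderedRing K
  have hK := CStarAlgebra.increasingApproximateUnit K
  refine ⟨map Subtype.val (CStarAlgebra.approximateUnit K), hK.neBot.map _,
    eventually_map.2 (.of_forall fun u => (TwoSidedIdeal.mem_ker q).2 u.2), ?_,
    hK.eventually_norm, fun x hx => ?_⟩
  · refine eventually_map.2 (hK.eventually_nonneg.mono fun u hu => ?_)
    obtain ⟨d, rfl⟩ := CStarAlgebra.nonneg_iff_eq_star_mul_self.1 hu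
    exact star_mul_self_nonneg (d : A)
  · exact tendsto_map'_iff.2 <| (continuous_subtype_val.tendsto _).comp <|
      hK.tendsto_mul_right ⟨x, (TwoSidedIdeal.mem_ker q).1 hx⟩

lemma exists_isQuasicentralApproxUnit_ker [StarOrderedRing A] {B : Type*}
    [NonUnitalCStarAlgebra B] (q : A →⋆ₙₐ[ℂ] B) :
    ∃ l : Filter A, IsQuasicentralApproxUnit (TwoSidedIdeal.ker q) l :=
  let ⟨_, hl⟩ := exists_isIdealApproxUnit_ker q
  hl.exists_isQuasicentralApproxUnit (isClosed_ker q)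

end QuasicentralApproxUnit

section Unitization

variable {A : Type*} [NonUnitalCStarAlgebra A] [PartialOrder A]
  {J : TwoSidedIdeal A} {l : Filter A}

namespace IsQuasicentralApproxUnit

lemma tendsto_lie_inr (hl : IsQuasicentralApproxUnit J l) (f : A⁺¹) :
    Tendsto (fun e : A => ⁅(e : A⁺¹), f⁆) l (𝓝 0) := by
  have hlim := (Unitization.isometry_inr (𝕜 := ℂ).continuous.tendsto _).comp (hl.tendsto_lie f.snd)
  rw [Unitization.inr_zero] at hlim
  refine hlim.congr fun e => ?_
  ext
  · simp [Ring.lie_def, sub_eq_add_neg]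
  · simp only [Function.comp_apply, Ring.lie_def, Unitization.snd_inr, sub_eq_add_neg,
      Unitization.snd_add, Unitization.snd_neg, Unitization.snd_mul, Unitization.fst_inr, zero_smul]
    abel

lemma eventually_norm_sub_mul_add_mul_lt [StarOrderedRing A] (hl : IsQuasicentralApproxUnit J l)
    {y v : A} {m r : ℝ} (hy : ‖y‖ ≤ m) (hv : ‖v‖ ≤ m) (hr : m < r) :
    ∀ᶠ e in l, ‖y - e * y + e * v‖ < r := by
  rw [← Unitization.norm_inr (𝕜 := ℂ)] at hy hv
  have hIcc : ∀ᶠ e : A in l, (e : A⁺¹) ∈ Set.Icc 0 1 := by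
    filter_upwards [hl.eventually_nonneg, hl.eventually_norm_le] with e he₀ he₁
    have he₀ : 0 ≤ (e : A⁺¹) := Unitization.inr_nonneg_iff.2 he₀
    rw [← Unitization.norm_inr (𝕜 := ℂ)] at he₁
    exact ⟨he₀, (CStarAlgebra.norm_le_one_iff_of_nonneg _ he₀).1 he₁⟩
  filter_upwards [eventually_norm_convexComb_lt hIcc hl.tendsto_lie_inr hy hv hr] with e he
  rw [← Unitization.norm_inr (𝕜 := ℂ)]
  simpa only [Unitization.inr_add, Unitization.inr_sub, Unitization.inr_mul, sub_mul, one_mul]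
    using he

end IsQuasicentralApproxUnit

end Unitization

section AsymptoticallyModular

variable {A : Type*} [NonUnitalCStarAlgebra A] [PartialOrder A]
  {J : TwoSidedIdeal A} {l : Filter A} {T : A →L[ℂ] A}

lemma IsIdealApproxUnit.map_mem (hl : IsIdealApproxUnit J l) (hJ : IsClosed (J : Set A))
    (hT : ∀ z, Tendsto (fun e => T (e * z) - e * T z) l (𝓝 0)) {x : A} (hx : x ∈ J) :
    T x ∈ J := by
  have := hl.neBot
  have hlim := ((T.continuous.tendsto x).comp (hl.tendsto_mul x hx)).sub (hT x)
  simp only [Function.comp_def, sub_sub_cancel, sub_zero] at hlim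
  exact hJ.mem_of_tendsto hlim (hl.eventually_mem.mono fun e he => J.mul_mem_right _ _ he)

lemma IsIdealApproxUnit.map_sub_mem (hl : IsIdealApproxUnit J l) (hJ : IsClosed (J : Set A))
    (hT : ∀ z, Tendsto (fun e => T (e * z) - e * T z) l (𝓝 0)) {z a₀ : A}
    (ha₀ : T a₀ - a₀ ∈ J) (hz : z - a₀ ∈ J) : T z - a₀ ∈ J := by
  have hmem := J.add_mem (hl.map_mem hJ hT hz) ha₀
  rwa [map_sub, sub_add_sub_cancel] at hmem

lemma IsIdealApproxUnit.eventually_norm_map_smul_mul_le (hl : IsIdealApproxUnit J l)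
    (hT : ∀ z, Tendsto (fun e => T (e * z) - e * T z) l (𝓝 0)) (z : A) {t δ : ℝ} (ht : 0 ≤ t)
    (hδ : 0 < δ) : ∀ᶠ e in l, ‖T (t • (e * z))‖ ≤ t * ‖T z‖ + δ := by
  have herr : Tendsto (fun e => t • (T (e * z) - e * T z)) l (𝓝 0) := by
    simpa only [smul_zero] using (hT z).const_smul t
  filter_upwards [hl.eventually_norm_le,
    herr.norm.eventually_le_const (norm_zero.trans_lt hδ)] with e he he_err
  have hsplit : T (t • (e * z)) = t • (e * T z) + t • (T (e * z) - e * T z) := by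
    rw [ContinuousLinearMap.map_smul_of_tower, ← smul_add, add_sub_cancel]
  rw [hsplit]
  refine norm_add_le_of_le ?_ he_err
  rw [norm_smul, Real.norm_of_nonneg ht]
  grw [norm_mul_le, he, one_mul]

variable [StarOrderedRing A]

namespace IsQuasicentralApproxUnit

/-- With `x = T z`, the element `x - t • (e * x)` is close to the operator-convex combination
`(1 - e) * y + e * ((1 - t) • x)`. -/
lemma eventually_norm_map_sub_smul_mul_lt (hl : IsQuasicentralApproxUnit J l)
    (hT : ∀ z, Tendsto (fun e => T (e * z) - e * T z) l (𝓝 0)) {z y : A} (hy : T z - y ∈ J)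
    {t δ : ℝ} (hδ : 0 < δ) (hz : ‖(1 - t) • T z‖ ≤ ‖y‖) :
    ∀ᶠ e in l, ‖T (z - t • (e * z))‖ < ‖y‖ + δ := by
  set x := T z with hx
  have herr : Tendsto (fun e => (x - y - e * (x - y)) - t • (T (e * z) - e * x)) l (𝓝 0) := by
    simpa only [sub_self, smul_zero] using
      ((hl.tendsto_mul _ hy).const_sub (x - y)).sub ((hT z).const_smul t)
  filter_upwards [hl.eventually_norm_sub_mul_add_mul_lt le_rfl hz
    (lt_add_of_pos_right ‖y‖ (half_pos hδ)),
    herr.norm.eventually_lt_const (norm_zero.trans_lt (half_pos hδ))] with e he he_err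
  have hsplit : T (z - t • (e * z)) = (y - e * y + e * ((1 - t) • x)) +
      ((x - y - e * (x - y)) - t • (T (e * z) - e * x)) := by
    simp only [map_sub, ContinuousLinearMap.map_smul_of_tower, ← hx, mul_smul_comm, sub_smul,
      one_smul, smul_sub, mul_sub]
    abel
  rw [hsplit]
  exact ((norm_add_le _ _).trans_lt (add_lt_add he he_err)).trans_eq (by ring)

lemma exists_mem_norm_map_sub_le (hl : IsQuasicentralApproxUnit J l)
    (hT : ∀ z, Tendsto (fun e => T (e * z) - e * T z) l (𝓝 0)) {z y : A} (hy : T z - y ∈ J)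
    {ε δ : ℝ} (hε : 0 < ε) (hδ : 0 < δ) (hz : ‖T z‖ ≤ ‖y‖ + ε) :
    ∃ k ∈ J, ‖T (z - k)‖ ≤ ‖y‖ + δ ∧ ‖T k‖ ≤ ε + δ := by
  have := hl.neBot
  have hyε : 0 < ‖y‖ + ε := by positivity
  obtain ⟨t, ht₀, ht₁, ht⟩ : ∃ t : ℝ, 0 ≤ t ∧ t ≤ 1 ∧ t * (‖y‖ + ε) = ε :=
    ⟨ε / (‖y‖ + ε), by positivity, div_le_one_of_le₀ (by simp) hyε.le, div_mul_cancel₀ _ hyε.ne'⟩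
  have hv : ‖(1 - t) • T z‖ ≤ ‖y‖ := calc
    ‖(1 - t) • T z‖ = (1 - t) * ‖T z‖ := by
      rw [norm_smul, Real.norm_of_nonneg (sub_nonneg.2 ht₁)]
    _ ≤ (1 - t) * (‖y‖ + ε) := mul_le_mul_of_nonneg_left hz (sub_nonneg.2 ht₁)
    _ = ‖y‖ := by rw [one_sub_mul, ht, add_sub_cancel_right]
  obtain ⟨e, heJ, hsub, hle⟩ := (hl.eventually_mem.and <|
    (hl.eventually_norm_map_sub_smul_mul_lt hT hy hδ hv).and <|
    hl.eventually_norm_map_smul_mul_le hT z ht₀ hδ).exists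
  refine ⟨t • (e * z), ?_, hsub.le, hle.trans ?_⟩
  · rw [← mul_smul_comm]
    exact J.mul_mem_right _ _ heJ
  · grw [hz, ht]

lemma exists_mem_closure_norm_le (hl : IsQuasicentralApproxUnit J l) (hJ : IsClosed (J : Set A))
    (hT : ∀ z, Tendsto (fun e => T (e * z) - e * T z) l (𝓝 0)) {a₀ y : A} (ha₀ : T a₀ - a₀ ∈ J)
    (hy : y - a₀ ∈ J) : ∃ x ∈ closure (T '' {z | z - a₀ ∈ J}), ‖x‖ ≤ ‖y‖ := by
  have hTz {z : A} (hz : z - a₀ ∈ J) : T z - y ∈ J := by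
    have hmem := J.sub_mem (hl.map_sub_mem hJ hT ha₀ hz) hy
    rwa [sub_sub_sub_cancel_right] at hmem
  simp_rw [← sub_nonpos (b := ‖y‖)]
  have hne : {z | z - a₀ ∈ J}.Nonempty := ⟨a₀, by simp [J.zero_mem]⟩
  refine exists_mem_closure_nonpos_of_halving (C := 3 / 2) (hne.image T)
    (continuous_norm.sub continuous_const) ?_
  rintro ε hε _ ⟨z, hz, rfl⟩ hzε
  obtain ⟨k, hkJ, hzk, hk⟩ := hl.exists_mem_norm_map_sub_le hT (hTz hz) hε (half_pos hε)
    (sub_le_iff_le_add'.1 hzε)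
  refine ⟨T (z - k), ⟨z - k, ?_, rfl⟩, sub_le_iff_le_add'.2 hzk, ?_⟩
  · rw [Set.mem_ofPred_eq, sub_right_comm]
    exact J.sub_mem hz hkJ
  · rw [dist_eq_norm, ← map_sub, sub_sub_cancel]
    linarith

end IsQuasicentralApproxUnit

end AsymptoticallyModular

theorem stmt_2_general {A B : Type*} [NonUnitalCStarAlgebra A] [PartialOrder A] [StarOrderedRing A]
    [NonUnitalCStarAlgebra B] (q : A →⋆ₙₐ[ℂ] B) {l : Filter A}
    (hl : IsQuasicentralApproxUnit (TwoSidedIdeal.ker q) l) (T : A →L[ℂ] A)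
    (hT : ∀ z, Tendsto (fun e => T (e * z) - e * T z) l (𝓝 0))
    (b : B) (a₀ : A) (ha₀ : q a₀ = b) (hTa₀ : q (T a₀) = b) :
    ∃ x ∈ closure (T '' (q ⁻¹' {b})), ‖x‖ = ‖b‖ ∧ q x = b := by
  subst ha₀
  have hker (u v : A) : u - v ∈ TwoSidedIdeal.ker q ↔ q u = q v := by
    rw [TwoSidedIdeal.mem_ker, map_sub, sub_eq_zero]
  obtain ⟨y, hqy, hy⟩ := exists_map_eq_norm_le q a₀
  obtain ⟨x, hx, hxy⟩ := hl.exists_mem_closure_norm_le (isClosed_ker q) hT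
    ((hker _ _).2 hTa₀) ((hker _ _).2 hqy)
  simp only [hker] at hx
  have hfiber : IsClosed (q ⁻¹' {q a₀}) := isClosed_singleton.preimage (map_continuous q)
  have hsubset : T '' (q ⁻¹' {q a₀}) ⊆ q ⁻¹' {q a₀} := Set.image_subset_iff.2 fun z hz =>
    (hker _ _).1 <| hl.map_sub_mem (isClosed_ker q) hT ((hker _ _).2 hTa₀) ((hker _ _).2 hz)
  have hqx : q x = q a₀ := closure_minimal hsubset hfiber hx
  exact ⟨x, hx, (hxy.trans hy).antisymm (hqx ▸ NonUnitalStarAlgHom.norm_apply_le q x), hqx⟩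

section ElementaryOperator

variable {A : Type*} [NonUnitalCStarAlgebra A] {ι : Type*} [Fintype ι]

/-- The elementary operator `x ↦ ∑ i, a i * x * c i`. Since `A` is an ideal of `A⁺¹`, the sum is an
element of `A`, which the second component recovers. -/
def elementaryOperator (a c : ι → A⁺¹) : A →L[ℂ] A where
  toFun x := (∑ i, a i * x * c i).snd
  map_add' x y := by simp [mul_add, add_mul, Finset.sum_add_distrib]
  map_smul' r x := by simp [← Finset.smul_sum]
  cont := Unitization.continuous_snd.comp <| by
    have := Unitization.continuous_inr (𝕜 := ℂ) (A := A)
    fun_prop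

lemma inr_elementaryOperator (a c : ι → A⁺¹) (x : A) :
    (elementaryOperator a c x : A⁺¹) = ∑ i, a i * (x : A⁺¹) * c i := by
  ext
  · exact ((map_sum (Unitization.fstHom ℂ A) _ _).trans
      (Finset.sum_eq_zero fun i _ => by simp)).symm
  · rfl

lemma IsQuasicentralApproxUnit.tendsto_elementaryOperator_sub [PartialOrder A]
    {J : TwoSidedIdeal A} {l : Filter A} (hl : IsQuasicentralApproxUnit J l) (a c : ι → A⁺¹)
    (z : A) : Tendsto (fun e => elementaryOperator a c (e * z) - e * elementaryOperator a c z)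
      l (𝓝 0) := by
  have hlim : Tendsto (fun e : A => -∑ i, ⁅(e : A⁺¹), a i⁆ * z * c i) l (𝓝 0) := by
    simpa using (tendsto_finsetSum Finset.univ fun i _ =>
      ((hl.tendsto_lie_inr (a i)).mul_const (z : A⁺¹)).mul_const (c i)).neg
  refine (Unitization.isometry_inr (𝕜 := ℂ)).isEmbedding.tendsto_nhds_iff.2 (hlim.congr fun e => ?_)
  simp only [Function.comp_apply, Unitization.inr_sub, Unitization.inr_mul,
    inr_elementaryOperator, Ring.lie_def, Finset.mul_sum, ← Finset.sum_sub_distrib,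
    ← Finset.sum_neg_distrib]
  exact Finset.sum_congr rfl fun i _ => by noncomm_ring

end ElementaryOperator

/-- Let `A` be a C*-algebra, `I` a closed two-sided ideal with quotient map
`q : A → A/I` (encoded as a surjective non-unital star algebra homomorphism onto a
C*-algebra `B`, which is automatically the quotient by its kernel), and `T : A → A` an
elementary operator with coefficients in the minimal unitization. Let `b ∈ A/I`. If some
lift `a₀` of `b` satisfies that `T a₀` is again a lift of `b`, then the closure of
`{T a : q a = b}` contains an element of norm `‖b‖` (which is in particular a lift of `b`). -/
theorem stmt_2 {A B : Type*} [NonUnitalCStarAlgebra A] [NonUnitalCStarAlgebra B]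
    (q : A →⋆ₙₐ[ℂ] B) (hq : Function.Surjective q)
    (N : ℕ) (a c : Fin N → Unitization ℂ A) (T : A → A)
    (hT : ∀ x : A, (T x : Unitization ℂ A) = ∑ i, a i * (x : Unitization ℂ A) * c i)
    (b : B) (a₀ : A) (ha₀ : q a₀ = b) (hTa₀ : q (T a₀) = b) :
    ∃ x ∈ closure {y : A | ∃ z : A, q z = b ∧ y = T z}, ‖x‖ = ‖b‖ ∧ q x = b := by
  let _ := CStarAlgebra.spectralOrder A
  let _ := CStarAlgebra.spectralOrderedRing A
  obtain rfl : T = elementaryOperator a c := funext fun x =>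
    Unitization.inr_injective ((hT x).trans (inr_elementaryOperator a c x).symm)
  obtain ⟨l, hl⟩ := exists_isQuasicentralApproxUnit_ker q
  obtain ⟨x, hx, hxb⟩ := stmt_2_general q hl _ (hl.tendsto_elementaryOperator_sub a c) b a₀ ha₀ hTa₀
  exact ⟨x, closure_mono (by rintro _ ⟨z, hz, rfl⟩; exact ⟨z, hz, rfl⟩) hx, hxb⟩
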